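/- arXiv:2007.06896 — 5 statements merged into one kernel-verified Lean document; each statement's English description precedes it below -/
import Mathlib

section
/- Let D be a semicomplete digraph on n vertices and let ℓ, k ∈ ℕ. Suppose there exist q ≥ 1 and a sequence of triples (Y_0,Z_0,S_0), (Y_1,Z_1,S_1), …, (Y_q,Z_q,S_q), each of which is t_i-valid for some t_i ∈ {0,1,…,n}, such that (Y_0,Z_0,S_0) = (∅, V(D), ∅), (Y_q,Z_q,S_q) = (V(D), ∅, ∅), each consecutive pair ((Y_{i−1},Z_{i−1},S_{i−1}), (Y_i,Z_i,S_i)) is compatible, and the total weight Σ_{i=1}^{q} w((Y_{i−1},Z_{i−1},S_{i−1}),(Y_i,Z_i,S_i)) is at most k. Then there exists X ⊆ V(D) with |X| ≤ k and mco(D−X) ≤ ℓ. -/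
open Set

/-- A (loopless) digraph given by its arc relation `A` is *semicomplete* if between
any two distinct vertices there is at least one arc. -/
def Semicomplete {V : Type*} (A : V → V → Prop) : Prop :=
  Irreflexive A ∧ ∀ x y : V, x ≠ y → A x y ∨ A y x

/-- Reachability (by a directed path) inside the subdigraph induced on the vertex set `W`. -/
def DReach {V : Type*} (A : V → V → Prop) (W : Set V) : V → V → Prop :=
  Relation.ReflTransGen fun a b => a ∈ W ∧ b ∈ W ∧ A a b

/-- The vertex set of the strongly connected component of `v` in the
subdigraph induced on the vertex set `W`. -/
def dscc {V : Type*} (A : V → V → Prop) (W : Set V) (v : V) : Set V :=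
  {u | u ∈ W ∧ DReach A W v u ∧ DReach A W u v}

/-- `C` is the vertex set of a strongly connected component of the subdigraph induced on `W`. -/
def IsSccSet {V : Type*} (A : V → V → Prop) (W : Set V) (C : Set V) : Prop :=
  ∃ v ∈ W, C = dscc A W v

/-- `mco`: the maximum number of vertices in a strongly connected component of the
subdigraph induced on `W`. -/
noncomputable def mco {V : Type*} (A : V → V → Prop) (W : Set V) : ℕ :=
  sSup {n | ∃ v ∈ W, n = (dscc A W v).ncard}

/-- Out-degree of `v`. -/
noncomputable def outDeg {V : Type*} (A : V → V → Prop) (v : V) : ℕ := {u | A v u}.ncard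

/-- In-degree of `v`. -/
noncomputable def inDeg {V : Type*} (A : V → V → Prop) (v : V) : ℕ := {u | A u v}.ncard

/-- `S` covers all arcs from `Z` to `Y`. -/
def ArcCover {V : Type*} (A : V → V → Prop) (Y Z S : Set V) : Prop :=
  ∀ y ∈ Y, ∀ z ∈ Z, A z y → y ∈ S ∨ z ∈ S

/-- A triple `(Y,Z,S)` is `t`-valid (with respect to the digraph `A` and parameter `k`). -/
def TValid {V : Type*} [Fintype V] (A : V → V → Prop) (k t : ℕ) (Y Z S : Set V) : Prop :=
  Y ∪ Z = Set.univ ∧ Disjoint Y Z ∧ Y.ncard = t ∧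
  ArcCover A Y Z S ∧ (∀ S' ⊆ S, ArcCover A Y Z S' → S' = S) ∧
  S.ncard ≤ k ∧
  (∀ x ∈ S, Fintype.card V - t + k < outDeg A x → x ∈ Y) ∧
  (∀ x ∈ S, t + k < inDeg A x → x ∈ Z)

/-- The weight `w((Y1,Z1,S1),(Y2,Z2,S2)) = |S1 \ S2| + max (0, |(Z1 ∩ Y2) \ (S1 ∪ S2)| - ℓ)`. -/
noncomputable def wt {V : Type*} (ℓ : ℕ) (Z1 S1 Y2 S2 : Set V) : ℕ :=
  (S1 \ S2).ncard + (((Z1 ∩ Y2) \ (S1 ∪ S2)).ncard - ℓ)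

/-- Compatibility of a pair of valid triples. -/
def Compat {V : Type*} (ℓ k : ℕ) (Y1 Z1 S1 Y2 Z2 S2 : Set V) : Prop :=
  Y1 ⊂ Y2 ∧ (∀ x ∈ S1 ∩ Z1, x ∈ Z2 → x ∈ S2) ∧ (Y1 \ S1 ⊆ Y2 \ S2) ∧
  wt ℓ Z1 S1 Y2 S2 ≤ k

/-!
Let `Uᵢ := (Zᵢ₋₁ ∩ Yᵢ) \ (Sᵢ₋₁ ∪ Sᵢ)`. For every `i`, delete `Sᵢ₋₁ \ Sᵢ` and `max (0, |Uᵢ| - ℓ)`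
vertices of `Uᵢ`; this costs at most the weight of the `i`-th pair. As the sequence ends with
`S_q = ∅`, every `Sᵢ` is deleted entirely, so in what remains no arc leads from `Zᵢ` to `Yᵢ` and no
strong component has vertices on both sides. If `v` moves from `Zᵢ₋₁` to `Yᵢ`, the component of `v`
is therefore contained in what is left of `Uᵢ`, which has at most `ℓ` vertices.
-/

lemma exists_and_not_add_one {p : ℕ → Prop} {m n : ℕ} (hmn : m ≤ n) (hm : p m) (hn : ¬p n) :
    ∃ i, m ≤ i ∧ i < n ∧ p i ∧ ¬p (i + 1) := by
  by_contra! h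
  have hp (i : ℕ) (hmi : m ≤ i) : i ≤ n → p i := by
    induction i, hmi using Nat.le_induction with
    | base => exact fun _ => hm
    | succ i hmi ih => exact fun hin => h i hmi hin (ih (Nat.le_of_succ_le hin))
  exact hn (hp n hmn le_rfl)

lemma subset_biUnion_of_sdiff_add_one_subset {α : Type*} {S X : ℕ → Set α} {i q : ℕ} (hi : i ≤ q)
    (hSq : S q = ∅) (hSX : ∀ j < q, S j \ S (j + 1) ⊆ X j) :
    S i ⊆ ⋃ j ∈ Finset.range q, X j := by
  intro x hx
  obtain ⟨j, -, hjq, hxj⟩ := exists_and_not_add_one (p := (x ∈ S ·)) hi hx (by simp [hSq])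
  exact mem_biUnion (Finset.mem_coe.2 (Finset.mem_range.2 hjq)) (hSX j hjq hxj)

section StrongComponents

variable {V : Type*} {A : V → V → Prop} {W : Set V}

lemma mco_le {ℓ : ℕ} (h : ∀ v ∈ W, (dscc A W v).ncard ≤ ℓ) : mco A W ≤ ℓ :=
  csSup_le' <| by
    rintro _ ⟨v, hv, rfl⟩
    exact h v hv

lemma DReach.mem_of_arcCover {Y Z S : Set V} (hYZ : Y ∪ Z = univ) (hS : ArcCover A Y Z S)
    (hW : Disjoint W S) {u v : V} (huv : DReach A W u v) (hu : u ∈ Z) : v ∈ Z := by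
  induction huv with
  | refl => exact hu
  | @tail b c _ hbc hb =>
    obtain ⟨hbW, hcW, hbc⟩ := hbc
    refine (hYZ.superset (mem_univ c)).resolve_left fun hc => ?_
    exact (hS c hc b hb hbc).elim (hW.notMem_of_mem_left hcW) (hW.notMem_of_mem_left hbW)

lemma ArcCover.mem_iff_of_mem_dscc {Y Z S : Set V} (hS : ArcCover A Y Z S) (hYZ : Y ∪ Z = univ)
    (hW : Disjoint W S) {u v : V} (hu : u ∈ dscc A W v) : u ∈ Z ↔ v ∈ Z :=
  ⟨hu.2.2.mem_of_arcCover hYZ hS hW, hu.2.1.mem_of_arcCover hYZ hS hW⟩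

lemma dscc_subset_inter_sdiff {Y₁ Z₁ S₁ Y₂ Z₂ S₂ : Set V}
    (hYZ₁ : Y₁ ∪ Z₁ = univ) (hS₁ : ArcCover A Y₁ Z₁ S₁) (hW₁ : Disjoint W S₁)
    (hYZ₂ : Y₂ ∪ Z₂ = univ) (hS₂ : ArcCover A Y₂ Z₂ S₂) (hW₂ : Disjoint W S₂)
    {v : V} (hv₁ : v ∈ Z₁) (hv₂ : v ∉ Z₂) :
    dscc A W v ⊆ (Z₁ ∩ Y₂) \ (S₁ ∪ S₂) := by
  intro u hu
  have hu₁ : u ∈ Z₁ := (hS₁.mem_iff_of_mem_dscc hYZ₁ hW₁ hu).2 hv₁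
  have hu₂ : u ∉ Z₂ := mt (hS₂.mem_iff_of_mem_dscc hYZ₂ hW₂ hu).1 hv₂
  exact ⟨⟨hu₁, (hYZ₂.superset (mem_univ u)).resolve_right hu₂⟩,
    (hW₁.union_right hW₂).notMem_of_mem_left hu.1⟩

end StrongComponents

lemma exists_ncard_eq_sub_and_ncard_sdiff_le {α : Type*} [Finite α] (U : Set α) (ℓ : ℕ) :
    ∃ T : Set α, T.ncard = U.ncard - ℓ ∧ (U \ T).ncard ≤ ℓ := by
  obtain ⟨T, hTU, hT⟩ := exists_subset_card_eq (Nat.sub_le U.ncard ℓ)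
  refine ⟨T, hT, ?_⟩
  rw [ncard_sdiff hTU]
  lia

lemma exists_ncard_le_wt {V : Type*} [Finite V] (ℓ : ℕ) (Z₁ S₁ Y₂ S₂ : Set V) :
    ∃ X : Set V, X.ncard ≤ wt ℓ Z₁ S₁ Y₂ S₂ ∧ S₁ \ S₂ ⊆ X ∧
      (((Z₁ ∩ Y₂) \ (S₁ ∪ S₂)) \ X).ncard ≤ ℓ := by
  obtain ⟨T, hT, hle⟩ := exists_ncard_eq_sub_and_ncard_sdiff_le ((Z₁ ∩ Y₂) \ (S₁ ∪ S₂)) ℓ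
  refine ⟨S₁ \ S₂ ∪ T, ?_, subset_union_left, ?_⟩
  · rw [wt, ← hT]
    exact ncard_union_le _ _
  · exact (ncard_le_ncard (sdiff_subset_sdiff_right subset_union_right)).trans hle

theorem statement_1_general {V : Type*} [Finite V] (A : V → V → Prop) (ℓ : ℕ) {q : ℕ}
    {Y Z S : ℕ → Set V} (hYZ : ∀ i ≤ q, Y i ∪ Z i = univ)
    (hS : ∀ i ≤ q, ArcCover A (Y i) (Z i) (S i))
    (hZ0 : Z 0 = univ) (hZq : Z q = ∅) (hSq : S q = ∅) :
    ∃ X : Set V, X.ncard ≤ ∑ i ∈ Finset.range q, wt ℓ (Z i) (S i) (Y (i + 1)) (S (i + 1)) ∧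
      mco A (univ \ X) ≤ ℓ := by
  choose X hXcard hSX hXle using fun i => exists_ncard_le_wt ℓ (Z i) (S i) (Y (i + 1)) (S (i + 1))
  refine ⟨⋃ i ∈ Finset.range q, X i, (Finset.set_ncard_biUnion_le _ _).trans
    (Finset.sum_le_sum fun i _ => hXcard i), mco_le fun v _ => ?_⟩
  have hW (i : ℕ) (hi : i ≤ q) : Disjoint (univ \ ⋃ j ∈ Finset.range q, X j) (S i) :=
    disjoint_sdiff_left.mono_right (subset_biUnion_of_sdiff_add_one_subset hi hSq fun j _ => hSX j)
  obtain ⟨i, -, hiq, hvZ, hvZ'⟩ : ∃ i, 0 ≤ i ∧ i < q ∧ v ∈ Z i ∧ v ∉ Z (i + 1) :=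
    exists_and_not_add_one q.zero_le (by simp [hZ0]) (by simp [hZq])
  have hsub := dscc_subset_inter_sdiff (hYZ i hiq.le) (hS i hiq.le) (hW i hiq.le)
    (hYZ (i + 1) hiq) (hS (i + 1) hiq) (hW (i + 1) hiq) hvZ hvZ'
  have hXi : X i ⊆ ⋃ j ∈ Finset.range q, X j :=
    subset_biUnion_of_mem (u := X) (Finset.mem_coe.2 (Finset.mem_range.2 hiq))
  have hleft : dscc A (univ \ ⋃ j ∈ Finset.range q, X j) v ⊆
      ((Z i ∩ Y (i + 1)) \ (S i ∪ S (i + 1))) \ X i :=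
    fun u hu => ⟨hsub hu, notMem_subset hXi hu.1.2⟩
  exact (ncard_le_ncard hleft).trans (hXle i)

/-- if there is a sequence of valid triples from `(∅, V, ∅)` to `(V, ∅, ∅)`
whose consecutive pairs are compatible and whose total weight is at most `k`, then there is
a set `X` of at most `k` vertices with `mco(D - X) ≤ ℓ`. -/
theorem statement_1 {V : Type*} [Fintype V] (A : V → V → Prop)
    (hA : Semicomplete A) (ℓ k : ℕ)
    (hseq : ∃ q ≥ 1, ∃ Y Z S : ℕ → Set V,
      (∀ i ≤ q, ∃ t ≤ Fintype.card V, TValid A k t (Y i) (Z i) (S i)) ∧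
      Y 0 = ∅ ∧ Z 0 = Set.univ ∧ S 0 = ∅ ∧
      Y q = Set.univ ∧ Z q = ∅ ∧ S q = ∅ ∧
      (∀ i < q, Compat ℓ k (Y i) (Z i) (S i) (Y (i + 1)) (Z (i + 1)) (S (i + 1))) ∧
      (∑ i ∈ Finset.range q, wt ℓ (Z i) (S i) (Y (i + 1)) (S (i + 1))) ≤ k) :
    ∃ X : Set V, X.ncard ≤ k ∧ mco A (Set.univ \ X) ≤ ℓ := by
  obtain ⟨q, -, Y, Z, S, hval, -, hZ0, -, -, hZq, hSq, -, hsum⟩ := hseq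
  obtain ⟨X, hX, hmco⟩ := statement_1_general A ℓ (fun i hi => (hval i hi).elim fun _ h => h.2.1)
    (fun i hi => (hval i hi).elim fun _ ⟨_, _, _, _, hS, _⟩ => hS) hZ0 hZq hSq
  exact ⟨X, hX.trans hsum, hmco⟩
end

section
/- Let D be a digraph on n vertices, let k ∈ ℕ, and let (Y,Z,S) be a t-valid triple for some t. Then every vertex v of D with d⁺_D(v) > n−t+k lies in Y, and every vertex v of D with d⁻_D(v) > t+k lies in Z. -/
open Set

/-!
If a vertex `v ∈ Z` lies outside the cover `S`, every arc from `v` into `Y` must be covered at its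
head, so all out-neighbours of `v` lie in `Z ∪ S`. Reversing all arcs exchanges `Y` and `Z`, which
gives the bound on in-degrees.
-/

section ArcCover

variable {V : Type*} {A : V → V → Prop} {Y Z S : Set V}

theorem ArcCover.swap (hcover : ArcCover A Y Z S) : ArcCover (Function.swap A) Z Y S :=
  fun z hz y hy hzy => (hcover y hy z hz hzy).symm

theorem ArcCover.setOf_subset_union (hcover : ArcCover A Y Z S) (hYZ : Y ∪ Z = univ) {v : V}
    (hvZ : v ∈ Z) (hvS : v ∉ S) : {u | A v u} ⊆ Z ∪ S := by
  intro u huv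
  rcases hYZ.ge (mem_univ u) with huY | huZ
  · exact .inr ((hcover u huY v hvZ huv).resolve_right hvS)
  · exact .inl huZ

theorem ArcCover.mem_of_lt_encard (hcover : ArcCover A Y Z S) (hYZ : Y ∪ Z = univ) {v : V}
    (hvS : v ∈ S → v ∈ Y) (hv : Z.encard + S.encard < {u | A v u}.encard) : v ∈ Y := by
  by_contra hvY
  have hvZ : v ∈ Z := (hYZ.ge (mem_univ v)).resolve_left hvY
  have hle : {u | A v u}.encard ≤ Z.encard + S.encard :=
    (encard_le_encard (hcover.setOf_subset_union hYZ hvZ (mt hvS hvY))).trans (encard_union_le Z S)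
  exact hv.not_ge hle

theorem statement_5_general {k : ℕ∞} (hcover : ArcCover A Y Z S) (hYZ : Y ∪ Z = univ)
    (hk : S.encard ≤ k)
    (hout : ∀ v ∈ S, Z.encard + k < {u | A v u}.encard → v ∈ Y)
    (hin : ∀ v ∈ S, Y.encard + k < {u | A u v}.encard → v ∈ Z) :
    (∀ v, Z.encard + k < {u | A v u}.encard → v ∈ Y) ∧
    (∀ v, Y.encard + k < {u | A u v}.encard → v ∈ Z) := by
  refine ⟨fun v hv => ?_, fun v hv => ?_⟩
  · exact hcover.mem_of_lt_encard hYZ (hout v · hv) ((add_le_add_right hk _).trans_lt hv)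
  · exact hcover.swap.mem_of_lt_encard ((union_comm Z Y).trans hYZ) (hin v · hv)
      ((add_le_add_right hk _).trans_lt hv)

end ArcCover

section TValid

variable {V : Type*} [Fintype V] {A : V → V → Prop} {k t : ℕ} {Y Z S : Set V}

theorem TValid.ncard_right (h : TValid A k t Y Z S) : Z.ncard = Fintype.card V - t := by
  obtain ⟨hYZ, hdisj, rfl, -⟩ := h
  have hcompl : Yᶜ = Z := (IsCompl.of_eq hdisj.inter_eq hYZ).compl_eq
  rw [← hcompl, ncard_compl, Nat.card_eq_fintype_card]

theorem TValid.lt_outDeg_iff (h : TValid A k t Y Z S) {v : V} :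
    Fintype.card V - t + k < outDeg A v ↔ Z.encard + k < {u | A v u}.encard := by
  rw [← h.ncard_right, outDeg, ← Z.toFinite.cast_ncard_eq, ← (toFinite _).cast_ncard_eq]
  norm_cast

theorem TValid.lt_inDeg_iff (h : TValid A k t Y Z S) {v : V} :
    t + k < inDeg A v ↔ Y.encard + k < {u | A u v}.encard := by
  obtain ⟨-, -, rfl, -⟩ := h
  rw [inDeg, ← Y.toFinite.cast_ncard_eq, ← (toFinite _).cast_ncard_eq]
  norm_cast

end TValid

/-- in any `t`-valid triple `(Y,Z,S)`, every vertex of out-degree greater than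
`n - t + k` lies in `Y` and every vertex of in-degree greater than `t + k` lies in `Z`. -/
theorem statement_5 {V : Type*} [Fintype V] (A : V → V → Prop) (k t : ℕ)
    (Y Z S : Set V) (h : TValid A k t Y Z S) :
    (∀ v : V, Fintype.card V - t + k < outDeg A v → v ∈ Y) ∧
    (∀ v : V, t + k < inDeg A v → v ∈ Z) := by
  have ⟨hYZ, _, _, hcover, _, hk, hout, hin⟩ := h
  simp only [h.lt_outDeg_iff, h.lt_inDeg_iff] at hout hin ⊢
  have hk' : S.encard ≤ k := encard_le_coe_iff_finite_ncard_le.2 ⟨S.toFinite, hk⟩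
  exact statement_5_general hcover hYZ hk' hout hin
end

section
/- Let D=(V,A) be a semicomplete digraph on n vertices, let k ∈ ℕ, and let t ∈ [n]. If there exists a t-valid triple, then there are at most 7k+2 vertices v ∈ V with d⁺_D(v) ≤ n−t+k and d⁻_D(v) ≤ t+k. -/
open Set

/-!
Outside the cover `S`, every vertex of `Y` dominates every vertex of `Z`. By double counting the
arcs, a nonempty set `P` of vertices of a semicomplete digraph contains a vertex with at least
`(|P| - 1) / 2` out-neighbours in `P`. For `P ⊆ Y \ S` this vertex also dominates the
`|Z| - |Z ∩ S|` vertices of `Z \ S`, so if all out-degrees in `P` are at most `|Z| + k`, then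
`|P| ≤ 2 (|Z ∩ S| + k) + 1`. Reversing all arcs gives the bound `2 (|Y ∩ S| + k) + 1` in `Z \ S`;
together with `S` itself this amounts to at most `4 k + 3 |S| + 2` vertices.
-/

theorem ncard_inter_add_ncard_inter_of_isCompl {α : Type*} {S Y Z : Set α} (hS : S.Finite)
    (hYZ : IsCompl Y Z) : (Y ∩ S).ncard + (Z ∩ S).ncard = S.ncard := by
  rw [← hYZ.compl_eq, Set.inter_comm Y, Set.inter_comm Yᶜ, ← Set.sdiff_eq,
    Set.ncard_inter_add_ncard_sdiff_eq_ncard S Y hS]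

section OutDegree

variable {V : Type*} {A : V → V → Prop}

open Classical in
theorem card_le_card_filter_add_card_filter_add_one {P : Finset V} {v : V}
    (hv : ∀ u ∈ P, u ≠ v → A v u ∨ A u v) :
    P.card ≤ (P.filter (A v)).card + (P.filter (A · v)).card + 1 := by
  have hsub : P ⊆ insert v (P.filter (A v) ∪ P.filter (A · v)) := by
    intro u hu
    rcases eq_or_ne u v with rfl | huv
    · exact Finset.mem_insert_self _ _
    · simpa [hu, huv] using hv u hu huv
  calc
    P.card ≤ (insert v (P.filter (A v) ∪ P.filter (A · v))).card := Finset.card_le_card hsub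
    _ ≤ (P.filter (A v) ∪ P.filter (A · v)).card + 1 := Finset.card_insert_le _ _
    _ ≤ (P.filter (A v)).card + (P.filter (A · v)).card + 1 := by
      gcongr
      exact Finset.card_union_le _ _

open Classical in
theorem exists_card_le_two_mul_card_filter_add_one {P : Finset V} (hne : P.Nonempty)
    (hP : (P : Set V).Pairwise fun x y => A x y ∨ A y x) :
    ∃ v ∈ P, P.card ≤ 2 * (P.filter (A v)).card + 1 := by
  have hcount : ∑ v ∈ P, (P.filter (A v)).card = ∑ v ∈ P, (P.filter (A · v)).card :=
    Finset.sum_card_bipartiteAbove_eq_sum_card_bipartiteBelow A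
  apply Finset.exists_le_of_sum_le hne
  calc
    ∑ _v ∈ P, P.card
      ≤ ∑ v ∈ P, ((P.filter (A v)).card + (P.filter (A · v)).card + 1) :=
        Finset.sum_le_sum fun v hv => card_le_card_filter_add_card_filter_add_one
          fun u hu huv => hP hv hu huv.symm
    _ = ∑ v ∈ P, (2 * (P.filter (A v)).card + 1) := by
      simp only [Finset.sum_add_distrib, ← hcount, two_mul]

theorem exists_ncard_le_two_mul_ncard_inter_add_one {P : Set V} (hfin : P.Finite)
    (hne : P.Nonempty) (hP : P.Pairwise fun x y => A x y ∨ A y x) :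
    ∃ v ∈ P, P.ncard ≤ 2 * (P ∩ {u | A v u}).ncard + 1 := by
  classical
  lift P to Finset V using hfin
  obtain ⟨v, hvP, hv⟩ := exists_card_le_two_mul_card_filter_add_one hne hP
  refine ⟨v, hvP, ?_⟩
  have hfilter : (P : Set V) ∩ {u | A v u} = P.filter (A v) := by
    ext u
    simp
  rwa [hfilter, Set.ncard_coe_finset, Set.ncard_coe_finset]

theorem ncard_le_of_outDeg_le_ncard_add [Finite V] {P W : Set V} {c : ℕ}
    (hP : P.Pairwise fun x y => A x y ∨ A y x) (hPW : Disjoint P W)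
    (hdom : ∀ v ∈ P, ∀ w ∈ W, A v w) (hdeg : ∀ v ∈ P, outDeg A v ≤ W.ncard + c) :
    P.ncard ≤ 2 * c + 1 := by
  rcases P.eq_empty_or_nonempty with rfl | hne
  · simp
  obtain ⟨v, hvP, hv⟩ := exists_ncard_le_two_mul_ncard_inter_add_one P.toFinite hne hP
  have houtDeg : (P ∩ {u | A v u}).ncard + W.ncard ≤ outDeg A v := by
    rw [← Set.ncard_union_eq (hPW.mono_left Set.inter_subset_left)]
    exact Set.ncard_le_ncard (Set.union_subset Set.inter_subset_right (hdom v hvP))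
  have hvdeg := hdeg v hvP
  omega

end OutDegree

section ArcCover

variable {V : Type*} {A : V → V → Prop} {Y Z S : Set V}

theorem ArcCover.flip (hS : ArcCover A Y Z S) : ArcCover (flip A) Z Y S :=
  fun z hz y hy hzy => (hS y hy z hz hzy).symm

theorem ArcCover.rel_of_mem_sdiff (hS : ArcCover A Y Z S)
    (hA : Pairwise fun x y => A x y ∨ A y x) (hYZ : Disjoint Y Z) {y z : V}
    (hy : y ∈ Y \ S) (hz : z ∈ Z \ S) : A y z :=
  (hA (hYZ.ne_of_mem hy.1 hz.1)).resolve_right fun hzy =>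
    (hS y hy.1 z hz.1 hzy).elim hy.2 hz.2

variable [Finite V]

theorem ArcCover.ncard_outDeg_le (hS : ArcCover A Y Z S)
    (hA : Pairwise fun x y => A x y ∨ A y x) (hYZ : Disjoint Y Z) (k : ℕ) :
    {v ∈ Y \ S | outDeg A v ≤ Z.ncard + k}.ncard ≤ 2 * ((Z ∩ S).ncard + k) + 1 := by
  apply ncard_le_of_outDeg_le_ncard_add (hA.set_pairwise _) (W := Z \ S)
  · exact hYZ.mono (fun _ hv => hv.1.1) Set.sdiff_subset
  · exact fun y hy z hz => hS.rel_of_mem_sdiff hA hYZ hy.1 hz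
  · intro v hv
    have hZ := Set.ncard_inter_add_ncard_sdiff_eq_ncard Z S
    have hdeg := hv.2
    omega

theorem ArcCover.ncard_inDeg_le (hS : ArcCover A Y Z S)
    (hA : Pairwise fun x y => A x y ∨ A y x) (hYZ : Disjoint Y Z) (k : ℕ) :
    {v ∈ Z \ S | inDeg A v ≤ Y.ncard + k}.ncard ≤ 2 * ((Y ∩ S).ncard + k) + 1 :=
  hS.flip.ncard_outDeg_le (fun _ _ hxy => (hA hxy).symm) hYZ.symm k

theorem statement_6_general (hA : Pairwise fun x y => A x y ∨ A y x) (hYZ : IsCompl Y Z)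
    (hS : ArcCover A Y Z S) (k : ℕ) :
    {v | outDeg A v ≤ Z.ncard + k ∧ inDeg A v ≤ Y.ncard + k}.ncard ≤
      4 * k + 3 * S.ncard + 2 := by
  have hcover : {v | outDeg A v ≤ Z.ncard + k ∧ inDeg A v ≤ Y.ncard + k} ⊆
      S ∪ ({v ∈ Y \ S | outDeg A v ≤ Z.ncard + k} ∪
        {v ∈ Z \ S | inDeg A v ≤ Y.ncard + k}) := by
    rintro v ⟨hout, hin⟩
    by_cases hvS : v ∈ S
    · exact Or.inl hvS
    · have hvYZ : v ∈ Y ∪ Z := hYZ.sup_eq_top.ge (Set.mem_univ v)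
      exact Or.inr (hvYZ.imp (fun hvY => ⟨⟨hvY, hvS⟩, hout⟩) fun hvZ => ⟨⟨hvZ, hvS⟩, hin⟩)
  have hle := (Set.ncard_le_ncard hcover).trans <| (Set.ncard_union_le _ _).trans <|
    Nat.add_le_add_left (Set.ncard_union_le _ _) _
  have hout := hS.ncard_outDeg_le hA hYZ.disjoint k
  have hin := hS.ncard_inDeg_le hA hYZ.disjoint k
  have hsplit := ncard_inter_add_ncard_inter_of_isCompl S.toFinite hYZ
  omega

end ArcCover

section TValid

variable {V : Type*} [Fintype V] {A : V → V → Prop} {k t : ℕ} {Y Z S : Set V}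

theorem TValid.isCompl (h : TValid A k t Y Z S) : IsCompl Y Z :=
  ⟨h.2.1, codisjoint_iff.2 h.1⟩

theorem TValid.ncard_left (h : TValid A k t Y Z S) : Y.ncard = t :=
  h.2.2.1

theorem TValid.arcCover (h : TValid A k t Y Z S) : ArcCover A Y Z S :=
  h.2.2.2.1

theorem TValid.ncard_cover_le (h : TValid A k t Y Z S) : S.ncard ≤ k :=
  h.2.2.2.2.2.1

end TValid

/-- if a `t`-valid triple exists (`1 ≤ t ≤ n`), then at most `7k + 2` vertices
have out-degree at most `n - t + k` and in-degree at most `t + k`. -/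
theorem statement_6 {V : Type*} [Fintype V] (A : V → V → Prop) (hA : Semicomplete A)
    (k t : ℕ) (ht1 : 1 ≤ t) (ht2 : t ≤ Fintype.card V)
    (hex : ∃ Y Z S : Set V, TValid A k t Y Z S) :
    {v : V | outDeg A v ≤ Fintype.card V - t + k ∧ inDeg A v ≤ t + k}.ncard ≤ 7 * k + 2 := by
  obtain ⟨Y, Z, S, h⟩ := hex
  have hbound := statement_6_general hA.2 h.isCompl h.arcCover k
  rw [h.ncard_left, h.ncard_right] at hbound
  linarith [h.ncard_cover_le]
end

section
/- Let D be a digraph on n vertices, let k ∈ ℕ, let t ∈ [n], and let F = {v ∈ V(D) : d⁺_D(v) ≤ n−t+k and d⁻_D(v) ≤ t+k}. If (Y,Z,S) and (Y',Z',S') are both t-valid triples and Y ∩ F = Y' ∩ F, then Y = Y' and Z = Z'. -/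
open Set

/-!
A vertex of `Z` outside `S` has all its out-neighbours in `Z ∪ S`, hence out-degree at most
`n - t + k`, and the bound required of the vertices of `S` gives the same for all of `Z`. Reversing
the arcs, every vertex of `Y` has in-degree at most `t + k`. So `Y` contains every vertex
violating the out-degree bound and no vertex violating the in-degree bound: outside `F`, membership
in `Y` can be read off from the degrees alone.
-/

section ArcCover

variable {V : Type*} {A : V → V → Prop} {Y Z S : Set V}

theorem ArcCover.reverse (hS : ArcCover A Y Z S) : ArcCover (fun u v => A v u) Z Y S :=
  fun z hz y hy hzy => (hS y hy z hz hzy).symm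

theorem ArcCover.outNeighbors_subset (hS : ArcCover A Y Z S) (hYZ : Y ∪ Z = univ) {x : V}
    (hxZ : x ∈ Z) (hxS : x ∉ S) : {u | A x u} ⊆ Z ∪ S := by
  intro u hxu
  rcases hYZ.ge (mem_univ u) with huY | huZ
  · exact .inr ((hS u huY x hxZ hxu).resolve_right hxS)
  · exact .inl huZ

theorem ArcCover.outDeg_le [Finite V] (hS : ArcCover A Y Z S) (hYZ : Y ∪ Z = univ) {x : V}
    (hxZ : x ∈ Z) (hxS : x ∉ S) : outDeg A x ≤ Z.ncard + S.ncard :=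
  (ncard_le_ncard (hS.outNeighbors_subset hYZ hxZ hxS)).trans (ncard_union_le Z S)

theorem ArcCover.inDeg_le [Finite V] (hS : ArcCover A Y Z S) (hYZ : Y ∪ Z = univ) {x : V}
    (hxY : x ∈ Y) (hxS : x ∉ S) : inDeg A x ≤ Y.ncard + S.ncard :=
  hS.reverse.outDeg_le (union_comm Y Z ▸ hYZ) hxY hxS

end ArcCover

/-- The set `F` of the vertices respecting both degree bounds `d⁺ ≤ n - t + k` and `d⁻ ≤ t + k`;
the other vertices have their side prescribed by every `t`-valid triple. As in `TValid`, the
subtraction is truncated, which matters only for `t > n`. -/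
def degBoundedSet {V : Type*} [Fintype V] (A : V → V → Prop) (k t : ℕ) : Set V :=
  {v | outDeg A v ≤ Fintype.card V - t + k ∧ inDeg A v ≤ t + k}

section TValid

variable {V : Type*} [Fintype V] {A : V → V → Prop} {k t : ℕ} {Y Z S : Set V}

theorem TValid.outDeg_le_of_mem_right (h : TValid A k t Y Z S) {x : V} (hxZ : x ∈ Z) :
    outDeg A x ≤ Fintype.card V - t + k := by
  have ⟨hYZ, hdisj, _, hcover, _, hSk, hout, _⟩ := h
  by_cases hxS : x ∈ S
  · exact not_lt.1 fun hx => hdisj.notMem_of_mem_right hxZ (hout x hxS hx)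
  · calc outDeg A x ≤ Z.ncard + S.ncard := hcover.outDeg_le hYZ hxZ hxS
      _ ≤ Fintype.card V - t + k := Nat.add_le_add h.ncard_right.le hSk

theorem TValid.inDeg_le_of_mem_left (h : TValid A k t Y Z S) {x : V} (hxY : x ∈ Y) :
    inDeg A x ≤ t + k := by
  obtain ⟨hYZ, hdisj, hY, hcover, -, hSk, -, hin⟩ := h
  by_cases hxS : x ∈ S
  · exact not_lt.1 fun hx => hdisj.notMem_of_mem_left hxY (hin x hxS hx)
  · calc inDeg A x ≤ Y.ncard + S.ncard := hcover.inDeg_le hYZ hxY hxS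
      _ ≤ t + k := Nat.add_le_add hY.le hSk

theorem TValid.inter_degBoundedSet_union (h : TValid A k t Y Z S) :
    Y ∩ degBoundedSet A k t ∪ {v | Fintype.card V - t + k < outDeg A v} = Y := by
  apply Subset.antisymm
  · rintro x (⟨hxY, -⟩ | hout)
    · exact hxY
    · have hxZ : x ∉ Z := fun hxZ => hout.not_ge (h.outDeg_le_of_mem_right hxZ)
      exact (h.1.ge (mem_univ x)).resolve_right hxZ
  · intro x hxY
    rcases le_or_gt (outDeg A x) (Fintype.card V - t + k) with hle | hlt
    · exact .inl ⟨hxY, hle, h.inDeg_le_of_mem_left hxY⟩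
    · exact .inr hlt

end TValid

/-- two `t`-valid triples whose `Y`-parts agree on the set `F` of vertices of
out-degree at most `n - t + k` and in-degree at most `t + k` have equal `Y`-parts and equal
`Z`-parts. -/
theorem statement_8 {V : Type*} [Fintype V] (A : V → V → Prop)
    (k t : ℕ) (ht1 : 1 ≤ t) (ht2 : t ≤ Fintype.card V)
    (Y Z S Y' Z' S' : Set V)
    (h : TValid A k t Y Z S) (h' : TValid A k t Y' Z' S')
    (hF : Y ∩ {v : V | outDeg A v ≤ Fintype.card V - t + k ∧ inDeg A v ≤ t + k} =
          Y' ∩ {v : V | outDeg A v ≤ Fintype.card V - t + k ∧ inDeg A v ≤ t + k}) :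
    Y = Y' ∧ Z = Z' := by
  have hYY' : Y = Y' :=
    calc Y = Y ∩ degBoundedSet A k t ∪ {v | Fintype.card V - t + k < outDeg A v} :=
          h.inter_degBoundedSet_union.symm
      _ = Y' ∩ degBoundedSet A k t ∪ {v | Fintype.card V - t + k < outDeg A v} :=
          congrArg (· ∪ _) hF
      _ = Y' := h'.inter_degBoundedSet_union
  exact ⟨hYY', by rw [← h.isCompl.compl_eq, ← h'.isCompl.compl_eq, hYY']⟩
end

section
/- Let T_1 and T_2 be strongly connected tournaments on disjoint vertex sets with |V(T_1)| + |V(T_2)| ≥ 3, and let D be the tournament on V(T_1) ∪ V(T_2) whose arc set consists of all arcs of T_1 and T_2 together with the arc uv for every u ∈ V(T_1) and v ∈ V(T_2). Then for every x ∈ V(T_1) and y ∈ V(T_2), the tournament obtained from D by replacing the arc xy with the arc yx is strongly connected. -/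
open Set

/-! Strong connectivity of `T1` and of `T2` survives the reversal, because no arc inside `V1` or
inside `V2` is touched. As `|V1| + |V2| ≥ 3`, some arc from `V1` to `V2` other than `xy` remains,
and `yx` leads back from `V2` to `V1`, so the two parts merge into one strong component. -/

section

variable {V : Type*}

/-- The subdigraph of `A` induced on `W` is strongly connected. Since `DReach` is reflexive, this
includes the empty and the one-vertex digraph. -/
def StronglyConnectedOn (A : V → V → Prop) (W : Set V) : Prop :=
  ∀ u ∈ W, ∀ v ∈ W, DReach A W u v

/-- The digraph `D` built from `T1` on `V1` and `T2` on `V2` by adding every arc from `V1`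
to `V2`. The relations `T1` and `T2` are not cut down to `V1` and `V2`. -/
def directedJoin (V1 V2 : Set V) (T1 T2 : V → V → Prop) (a b : V) : Prop :=
  T1 a b ∨ T2 a b ∨ (a ∈ V1 ∧ b ∈ V2)

/-- The digraph `A` with the arc `xy` replaced by `yx`. The arc `yx` is present in the result
even if `A` has no arc `xy`. -/
def reverseArc (A : V → V → Prop) (x y a b : V) : Prop :=
  (A a b ∧ ¬(a = x ∧ b = y)) ∨ (a = y ∧ b = x)

variable {A B : V → V → Prop} {W W₁ W₂ : Set V} {a b c d x y : V}

theorem DReach.mono (hW : W₁ ⊆ W₂) (hAB : ∀ u ∈ W₁, ∀ v ∈ W₁, A u v → B u v)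
    (h : DReach A W₁ a b) : DReach B W₂ a b :=
  Relation.ReflTransGen.mono
    (fun u v ⟨hu, hv, huv⟩ => ⟨hW hu, hW hv, hAB u hu v hv huv⟩) a b h

theorem DReach.of_arc (ha : a ∈ W) (hb : b ∈ W) (hab : A a b) : DReach A W a b :=
  Relation.ReflTransGen.single ⟨ha, hb, hab⟩

theorem StronglyConnectedOn.mono (h : StronglyConnectedOn A W)
    (hAB : ∀ u ∈ W, ∀ v ∈ W, A u v → B u v) : StronglyConnectedOn B W :=
  fun u hu v hv => (h u hu v hv).mono Subset.rfl hAB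

theorem StronglyConnectedOn.dreach_of_subset (h : StronglyConnectedOn A W₁) (hW : W₁ ⊆ W₂)
    (ha : a ∈ W₁) (hb : b ∈ W₁) : DReach A W₂ a b :=
  (h a ha b hb).mono hW fun _ _ _ _ huv => huv

theorem StronglyConnectedOn.union (h₁ : StronglyConnectedOn A W₁) (h₂ : StronglyConnectedOn A W₂)
    (ha : a ∈ W₁) (hb : b ∈ W₂) (hab : A a b) (hc : c ∈ W₂) (hd : d ∈ W₁) (hcd : A c d) :
    StronglyConnectedOn A (W₁ ∪ W₂) := by
  have within₁ {u v : V} (hu : u ∈ W₁) (hv : v ∈ W₁) : DReach A (W₁ ∪ W₂) u v :=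
    h₁.dreach_of_subset subset_union_left hu hv
  have within₂ {u v : V} (hu : u ∈ W₂) (hv : v ∈ W₂) : DReach A (W₁ ∪ W₂) u v :=
    h₂.dreach_of_subset subset_union_right hu hv
  have forth : DReach A (W₁ ∪ W₂) a b := .of_arc (.inl ha) (.inr hb) hab
  have back : DReach A (W₁ ∪ W₂) c d := .of_arc (.inr hc) (.inl hd) hcd
  rintro u (hu | hu) v (hv | hv)
  · exact within₁ hu hv
  · exact ((within₁ hu ha).trans forth).trans (within₂ hb hv)
  · exact ((within₂ hu hc).trans back).trans (within₁ hd hv)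
  · exact within₂ hu hv

theorem StronglyConnectedOn.reverseArc (h : StronglyConnectedOn A W) (hxy : ¬(x ∈ W ∧ y ∈ W)) :
    StronglyConnectedOn (reverseArc A x y) W :=
  h.mono fun _ hu _ hv huv => .inl ⟨huv, fun ⟨hux, hvy⟩ => hxy ⟨hux ▸ hu, hvy ▸ hv⟩⟩

theorem StronglyConnectedOn.directedJoin_left {T₁ : V → V → Prop} (h : StronglyConnectedOn T₁ W₁)
    (W₂ : Set V) (T₂ : V → V → Prop) : StronglyConnectedOn (directedJoin W₁ W₂ T₁ T₂) W₁ :=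
  h.mono fun _ _ _ _ huv => .inl huv

theorem StronglyConnectedOn.directedJoin_right {T₂ : V → V → Prop} (h : StronglyConnectedOn T₂ W₂)
    (W₁ : Set V) (T₁ : V → V → Prop) : StronglyConnectedOn (directedJoin W₁ W₂ T₁ T₂) W₂ :=
  h.mono fun _ _ _ _ huv => .inr (.inl huv)

theorem nontrivial_prod_of_three_le_encard_add {α β : Type*} {s : Set α} {t : Set β}
    (hs : s.Nonempty) (ht : t.Nonempty) (hcard : 3 ≤ s.encard + t.encard) :
    (s ×ˢ t).Nontrivial := by
  by_contra h
  have hst : (s ×ˢ t).Subsingleton := not_nontrivial_iff.mp h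
  have hs₁ : s.encard ≤ 1 :=
    encard_le_one_iff_subsingleton.mpr (fst_image_prod s ht ▸ hst.image Prod.fst)
  have ht₁ : t.encard ≤ 1 :=
    encard_le_one_iff_subsingleton.mpr (snd_image_prod hs t ▸ hst.image Prod.snd)
  exact absurd (hcard.trans (add_le_add hs₁ ht₁)) (by decide)

theorem statement_17_general {V1 V2 : Set V} (hdisj : Disjoint V1 V2) {T1 T2 : V → V → Prop}
    (hT1 : StronglyConnectedOn T1 V1) (hT2 : StronglyConnectedOn T2 V2)
    (hcard : 3 ≤ V1.encard + V2.encard) (hx : x ∈ V1) (hy : y ∈ V2) :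
    StronglyConnectedOn (reverseArc (directedJoin V1 V2 T1 T2) x y) (V1 ∪ V2) := by
  have hV1 : StronglyConnectedOn (reverseArc (directedJoin V1 V2 T1 T2) x y) V1 :=
    (hT1.directedJoin_left V2 T2).reverseArc fun h => hdisj.notMem_of_mem_left h.2 hy
  have hV2 : StronglyConnectedOn (reverseArc (directedJoin V1 V2 T1 T2) x y) V2 :=
    (hT2.directedJoin_right V1 T1).reverseArc fun h => hdisj.notMem_of_mem_left hx h.1
  obtain ⟨⟨a, b⟩, ⟨ha, hb⟩, hab⟩ :=
    (nontrivial_prod_of_three_le_encard_add ⟨x, hx⟩ ⟨y, hy⟩ hcard).exists_ne (x, y)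
  have hforth : reverseArc (directedJoin V1 V2 T1 T2) x y a b :=
    .inl ⟨.inr (.inr ⟨ha, hb⟩), fun h => hab (Prod.ext h.1 h.2)⟩
  have hback : reverseArc (directedJoin V1 V2 T1 T2) x y y x := .inr ⟨rfl, rfl⟩
  exact hV1.union hV2 ha hb hforth hy hx hback

end

/-- let `T1`, `T2` be strongly connected tournaments on disjoint vertex sets
`V1`, `V2` with `|V1| + |V2| ≥ 3`, and let `D` be the tournament on `V1 ∪ V2` consisting of
`T1`, `T2` and all arcs from `V1` to `V2`. Reversing any single arc `xy` with `x ∈ V1`,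
`y ∈ V2` yields a strongly connected tournament. -/
theorem statement_17 {V : Type*} [Fintype V] (V1 V2 : Set V) (hdisj : Disjoint V1 V2)
    (T1 T2 : V → V → Prop)
    (hT1supp : ∀ u v : V, T1 u v → u ∈ V1 ∧ v ∈ V1)
    (hT2supp : ∀ u v : V, T2 u v → u ∈ V2 ∧ v ∈ V2)
    (hT1irr : Irreflexive T1) (hT2irr : Irreflexive T2)
    (hT1tour : ∀ u ∈ V1, ∀ v ∈ V1, u ≠ v → (T1 u v ↔ ¬ T1 v u))
    (hT2tour : ∀ u ∈ V2, ∀ v ∈ V2, u ≠ v → (T2 u v ↔ ¬ T2 v u))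
    (hT1strong : ∀ u ∈ V1, ∀ v ∈ V1, DReach T1 V1 u v)
    (hT2strong : ∀ u ∈ V2, ∀ v ∈ V2, DReach T2 V2 u v)
    (hcard : 3 ≤ V1.ncard + V2.ncard)
    (x : V) (hx : x ∈ V1) (y : V) (hy : y ∈ V2) :
    ∀ u ∈ V1 ∪ V2, ∀ v ∈ V1 ∪ V2,
      DReach
        (fun a b =>
          ((T1 a b ∨ T2 a b ∨ (a ∈ V1 ∧ b ∈ V2)) ∧ ¬(a = x ∧ b = y)) ∨ (a = y ∧ b = x))
        (V1 ∪ V2) u v := by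
  have hencard : 3 ≤ V1.encard + V2.encard :=
    (Nat.cast_le.mpr hcard).trans (add_le_add V1.ncard_le_encard V2.ncard_le_encard)
  exact statement_17_general hdisj hT1strong hT2strong hencard hx hy
end
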